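/- arXiv:2209.00418 — 2 statements merged into one kernel-verified Lean document; each statement's English description precedes it below -/
import Mathlib

section
/- Let k ≥ 2 and let P and Q be Dyck words of size n such that, for some (possibly empty) words A and B, either P = A d^k u B and Q = A u d^k B, or P = A d u^k B and Q = A u^k d B. Then P ≤ Q in the Dyck lattice Dyck_n and the interval [P,Q] is linear of height k. -/
/-!
Common definitions.  A letter of a word is a `Bool`: `true` is an up step `u`,
`false` is a down step `d`.  Positions in words are 0-based.
-/

/-- A (possibly empty) Dyck word: as many `u`'s as `d`'s, and every
prefix has at least as many `u`'s as `d`'s. -/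
def IsDyckPath (w : List Bool) : Prop :=
  w.count true = w.count false ∧ ∀ p, p <+: w → p.count false ≤ p.count true

/-- A Dyck word of size `n`: `n` up steps, `n` down steps, every prefix has
at least as many `u`'s as `d`'s. -/
def IsDyckWord (n : ℕ) (w : List Bool) : Prop :=
  w.count true = n ∧ w.count false = n ∧ ∀ p, p <+: w → p.count false ≤ p.count true

/-- The set of Dyck words of size `n`. -/
def DyckSet (n : ℕ) : Set (List Bool) := {w | IsDyckWord n w}

/-- An increment function: a `{0,1}`-valued function (the paper's `δ : {1,…,n} → {0,1}`;
only the values on `{1,…,n}` are ever used). -/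
def IsIncFun (δ : ℕ → ℤ) : Prop := ∀ i, δ i = 0 ∨ δ i = 1

/-- The 0-based position in `w` of the `i`-th up step `u_i` (`i` is 1-based). -/
def upPos (w : List Bool) (i : ℕ) : ℕ :=
  ((List.range w.length).filter fun q => w.getD q false = true).getD (i - 1) 0

/-- `h_i(w)`: the (1-based, between 1 and 2n) position of the up step `u_i` in `w`. -/
def hpos (w : List Bool) (i : ℕ) : ℕ := upPos w i + 1

/-- The change of δ-altitude produced by the letter at position `q` of `w`:
the up step `u_i` contributes `δ i`, a down step contributes `-1`. -/
def stepVal (δ : ℕ → ℤ) (w : List Bool) (q : ℕ) : ℤ :=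
  if w.getD q false = true then δ ((w.take (q + 1)).count true) else -1

/-- The δ-elevation of the factor of `w` occupying positions `a, …, b-1`. -/
def elev (δ : ℕ → ℤ) (w : List Bool) (a b : ℕ) : ℤ :=
  ∑ q ∈ Finset.Ico a b, stepVal δ w q

/-- `C` is the δ-excursion of the up step of `w` at position `p`:
the smallest (nonempty) factor of `w` starting at `p` whose δ-elevation is `0`. -/
def IsDeltaExcAt (δ : ℕ → ℤ) (w : List Bool) (p : ℕ) (C : List Bool) : Prop :=
  w.getD p false = true ∧
  ∃ m, 0 < m ∧ p + m ≤ w.length ∧ C = (w.drop p).take m ∧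
    elev δ w p (p + m) = 0 ∧ ∀ m', 0 < m' → m' < m → elev δ w p (p + m') ≠ 0

/-- `C` is the excursion of the up step of `w` at position `p`: the smallest factor
of `w` starting at `p` that is itself a Dyck word. -/
def IsExcursionAt (w : List Bool) (p : ℕ) (C : List Bool) : Prop :=
  w.getD p false = true ∧
  ∃ m, 0 < m ∧ p + m ≤ w.length ∧ C = (w.drop p).take m ∧ IsDyckPath C ∧
    ∀ m', 0 < m' → m' < m → ¬ IsDyckPath ((w.drop p).take m')

/-- `ℓ_i(w; δ)`: the length of the δ-excursion of `u_i` in `w`. -/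
noncomputable def excLen (δ : ℕ → ℤ) (w : List Bool) (i : ℕ) : ℕ :=
  sInf {m | 0 < m ∧ elev δ w (upPos w i) (upPos w i + m) = 0}

/-- `Q` is the δ-rotation of `P` at some up step: `P = A d C B` with `d u_i` a valley
and `C` the δ-excursion of `u_i`, and `Q = A C d B`. -/
def DeltaRot (δ : ℕ → ℤ) (P Q : List Bool) : Prop :=
  ∃ A C B, P = A ++ false :: (C ++ B) ∧ Q = A ++ (C ++ false :: B) ∧
    IsDeltaExcAt δ P (A.length + 1) C

/-- The alt-Tamari order `Tam^δ`: reflexive transitive closure of δ-rotations. -/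
def altLE (δ : ℕ → ℤ) : List Bool → List Bool → Prop :=
  Relation.ReflTransGen (DeltaRot δ)

/-- The Tamari order: the alt-Tamari order for `δ ≡ 1` (the δ-excursion of any up step
is then its excursion). -/
def tamLE : List Bool → List Bool → Prop := altLE fun _ => 1

/-- The height (number of `u`'s minus number of `d`'s) of the length-`j` prefix of `w`. -/
def prefHeight (w : List Bool) (j : ℕ) : ℤ :=
  ((w.take j).count true : ℤ) - ((w.take j).count false : ℤ)

/-- The Dyck (inclusion) order: every prefix height of `P` is at most that of `Q`. -/
def dyckLE (P Q : List Bool) : Prop := ∀ j, prefHeight P j ≤ prefHeight Q j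

/-- Strict version of a relation `le`. -/
def ltOf (le : List Bool → List Bool → Prop) (P Q : List Bool) : Prop :=
  le P Q ∧ ¬ le Q P

/-- There is a strict chain `P = c 0 < c 1 < ⋯ < c k = Q` inside `S`. -/
def HasChainIn (S : Set (List Bool)) (le : List Bool → List Bool → Prop)
    (P Q : List Bool) (k : ℕ) : Prop :=
  ∃ c : ℕ → List Bool, c 0 = P ∧ c k = Q ∧ (∀ i ≤ k, c i ∈ S) ∧
    ∀ i < k, ltOf le (c i) (c (i + 1))

/-- The interval `[P,Q]` of the poset `(S, le)` has height `k`: `k` is the maximal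
length of a chain from `P` to `Q`. -/
def IntervalHeight (S : Set (List Bool)) (le : List Bool → List Bool → Prop)
    (P Q : List Bool) (k : ℕ) : Prop :=
  HasChainIn S le P Q k ∧ ∀ m, HasChainIn S le P Q m → m ≤ k

/-- The interval `[P,Q]` of the poset `(S, le)` is linear: it is totally ordered. -/
def LinearInterval (S : Set (List Bool)) (le : List Bool → List Bool → Prop)
    (P Q : List Bool) : Prop :=
  P ∈ S ∧ Q ∈ S ∧ le P Q ∧
  ∀ R R', R ∈ S → R' ∈ S → le P R → le R Q → le P R' → le R' Q → le R R' ∨ le R' R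

/-- `Q` covers `P` in the poset `(S, le)`. -/
def CovIn (S : Set (List Bool)) (le : List Bool → List Bool → Prop)
    (P Q : List Bool) : Prop :=
  P ∈ S ∧ Q ∈ S ∧ ltOf le P Q ∧ ∀ R ∈ S, ¬ (ltOf le P R ∧ ltOf le R Q)

/-- The number of valleys (factors `du`) of `w`. -/
def valleys (w : List Bool) : ℕ :=
  ((List.range w.length).filter fun q => !w.getD q true && w.getD (q + 1) false).length

/-!
In both cases `P` and `Q` differ in a single factor, which consists of `k` equal letters and one
other letter. A word squeezed between `P` and `Q` agrees with them outside this factor, and there it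
has the height of both at either end, so that its factor is a rearrangement of theirs. The
rearrangements of `k` equal letters and one other letter are given by the position of the odd letter
out, and moving that letter across its neighbour is a strict step of the order.
-/

section Chain

variable {S : Set (List Bool)} {le : List Bool → List Bool → Prop} {P Q : List Bool} {m : ℕ}

theorem ltOf_trans [IsTrans (List Bool) le] {R : List Bool} (hPQ : ltOf le P Q)
    (hQR : ltOf le Q R) : ltOf le P R :=
  ⟨_root_.trans hPQ.1 hQR.1, fun h => hPQ.2 (_root_.trans hQR.1 h)⟩

theorem ltOf_of_forall_ltOf_succ [IsTrans (List Bool) le] {c : ℕ → List Bool}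
    (hc : ∀ i < m, ltOf le (c i) (c (i + 1))) {i j : ℕ} (hij : i < j) (hj : j ≤ m) :
    ltOf le (c i) (c j) := by
  induction j, hij using Nat.le_induction with
  | base => exact hc i hj
  | succ j _ ih => exact ltOf_trans (ih (by lia)) (hc j hj)

theorem le_of_forall_ltOf_succ [IsPreorder (List Bool) le] {c : ℕ → List Bool}
    (hc : ∀ i < m, ltOf le (c i) (c (i + 1))) {i j : ℕ} (hij : i ≤ j) (hj : j ≤ m) :
    le (c i) (c j) := by
  rcases hij.eq_or_lt with rfl | hlt
  · exact refl _
  · exact (ltOf_of_forall_ltOf_succ hc hlt hj).1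

theorem HasChainIn.lt_card [IsPreorder (List Bool) le] {T : Finset (List Bool)}
    (h : HasChainIn S le P Q m) (hT : ∀ R ∈ S, le P R → le R Q → R ∈ T) : m < T.card := by
  obtain ⟨c, rfl, rfl, hS, hc⟩ := h
  have hmaps : Set.MapsTo c (Finset.range (m + 1)) T := fun i hi => by
    have him : i ≤ m := Nat.lt_succ_iff.mp (Finset.mem_range.mp hi)
    exact hT _ (hS i him) (le_of_forall_ltOf_succ hc i.zero_le him)
      (le_of_forall_ltOf_succ hc him le_rfl)
  have hinj : Set.InjOn c (Finset.range (m + 1)) := fun i hi j hj hij => by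
    by_contra hne
    wlog hlt : i < j generalizing i j
    · exact this j hj i hi hij.symm (Ne.symm hne) (by lia)
    · exact (ltOf_of_forall_ltOf_succ hc hlt (Nat.lt_succ_iff.mp (Finset.mem_range.mp hj))).2
        (hij ▸ refl _)
  simpa using Finset.card_le_card_of_injOn c hmaps hinj

theorem linearInterval_and_intervalHeight_of_chain [IsPreorder (List Bool) le] {k : ℕ}
    {W : ℕ → List Bool} (hS : ∀ i ≤ k, W i ∈ S) (hW : ∀ i < k, ltOf le (W i) (W (i + 1)))
    (hsurj : ∀ R ∈ S, le (W 0) R → le R (W k) → ∃ i ≤ k, R = W i) :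
    LinearInterval S le (W 0) (W k) ∧ IntervalHeight S le (W 0) (W k) k := by
  refine ⟨⟨hS 0 k.zero_le, hS k le_rfl, le_of_forall_ltOf_succ hW k.zero_le le_rfl, ?_⟩,
    ⟨W, rfl, rfl, hS, hW⟩, fun m hm => ?_⟩
  · intro R R' hR hR' hPR hRQ hPR' hR'Q
    obtain ⟨i, hi, rfl⟩ := hsurj R hR hPR hRQ
    obtain ⟨j, hj, rfl⟩ := hsurj R' hR' hPR' hR'Q
    exact (le_total i j).imp (fun h => le_of_forall_ltOf_succ hW h hj)
      (fun h => le_of_forall_ltOf_succ hW h hi)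
  · have hlt : m < ((Finset.range (k + 1)).image W).card := hm.lt_card fun R hR hPR hRQ => by
      obtain ⟨i, hi, rfl⟩ := hsurj R hR hPR hRQ
      exact Finset.mem_image_of_mem W (Finset.mem_range.mpr (Nat.lt_succ_iff.mpr hi))
    have hcard : ((Finset.range (k + 1)).image W).card ≤ k + 1 := by
      simpa using Finset.card_image_le (s := Finset.range (k + 1)) (f := W)
    exact Nat.lt_succ_iff.mp (hlt.trans_le hcard)

end Chain

section PrefHeight

@[simp]
theorem prefHeight_zero (w : List Bool) : prefHeight w 0 = 0 := by
  simp [prefHeight]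

@[simp]
theorem prefHeight_nil (j : ℕ) : prefHeight [] j = 0 := by
  simp [prefHeight]

@[simp]
theorem prefHeight_cons_succ (b : Bool) (w : List Bool) (j : ℕ) :
    prefHeight (b :: w) (j + 1) = (if b then 1 else -1) + prefHeight w j := by
  cases b <;> simp [prefHeight] <;> ring

theorem prefHeight_take (w : List Bool) (m j : ℕ) :
    prefHeight (w.take m) j = prefHeight w (min j m) := by
  simp only [prefHeight, List.take_take]

-- The truncated subtraction is intended: a prefix inside `X` contains nothing of `Y`.
theorem prefHeight_append (X Y : List Bool) (j : ℕ) :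
    prefHeight (X ++ Y) j = prefHeight X j + prefHeight Y (j - X.length) := by
  simp only [prefHeight, List.take_append, List.count_append]
  push_cast
  ring

theorem prefHeight_of_length_le {w : List Bool} {j : ℕ} (h : w.length ≤ j) :
    prefHeight w j = w.count true - w.count false := by
  rw [prefHeight, List.take_of_length_le h]

theorem prefHeight_eq_of_perm_of_length_le {X Y : List Bool} {j : ℕ} (h : X.Perm Y)
    (hj : X.length ≤ j) : prefHeight X j = prefHeight Y j := by
  rw [prefHeight_of_length_le hj, prefHeight_of_length_le (h.length_eq ▸ hj),
    h.count_eq, h.count_eq]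

theorem perm_of_length_eq_of_prefHeight_eq {X Y : List Bool} (hlen : X.length = Y.length)
    (hheight : prefHeight X X.length = prefHeight Y X.length) : X.Perm Y := by
  rw [prefHeight_of_length_le le_rfl, prefHeight_of_length_le hlen.ge] at hheight
  have hX := X.count_true_add_count_false
  have hY := Y.count_true_add_count_false
  rw [List.perm_iff_count, Bool.forall_bool]
  lia

theorem prefHeight_injective : Function.Injective prefHeight := by
  intro X
  induction X with
  | nil =>
    rintro (_ | ⟨b, Y⟩) h
    · rfl
    · have := congrFun h 1
      cases b <;> simp at this
  | cons a X ih =>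
    rintro (_ | ⟨b, Y⟩) h
    · have := congrFun h 1
      cases a <;> simp at this
    · have hhead : a = b := by
        have := congrFun h 1
        cases a <;> cases b <;> simp at this ⊢
      subst hhead
      rw [ih (funext fun j => by simpa using congrFun h (j + 1))]

end PrefHeight

section DyckLE

variable {A B P Q R X Y : List Bool}

instance : IsPartialOrder (List Bool) dyckLE where
  refl _ _ := le_rfl
  trans _ _ _ h₁ h₂ j := (h₁ j).trans (h₂ j)
  antisymm _ _ h₁ h₂ := prefHeight_injective (funext fun j => (h₁ j).antisymm (h₂ j))

theorem dyckLE.take (h : dyckLE P Q) (m : ℕ) : dyckLE (P.take m) (Q.take m) := fun j => by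
  simpa only [prefHeight_take] using h (min j m)

theorem dyckLE.of_append_of_perm (h : dyckLE (X ++ A) (Y ++ B)) (hXY : X.Perm Y) :
    dyckLE A B := fun j => by
  have hj := h (X.length + j)
  rw [prefHeight_append, prefHeight_append, ← hXY.length_eq, Nat.add_sub_cancel_left,
    prefHeight_eq_of_perm_of_length_le hXY (Nat.le_add_right _ _)] at hj
  exact le_of_add_le_add_left hj

theorem dyckLE_append_append_iff (hXY : X.length = Y.length) :
    dyckLE (A ++ (X ++ B)) (A ++ (Y ++ B)) ↔ dyckLE X Y := by
  simp only [dyckLE, prefHeight_append, hXY, add_le_add_iff_left, add_le_add_iff_right]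
  exact ⟨fun h j => by simpa using h (A.length + j), fun h j => h _⟩

theorem ltOf_append_append (h : ltOf dyckLE X Y) (hXY : X.length = Y.length) :
    ltOf dyckLE (A ++ (X ++ B)) (A ++ (Y ++ B)) :=
  ⟨(dyckLE_append_append_iff hXY).mpr h.1,
    fun h' => h.2 ((dyckLE_append_append_iff hXY.symm).mp h')⟩

theorem exists_append_of_dyckLE_of_dyckLE (hXY : X.Perm Y) (hlen : X.length ≤ R.length)
    (hPR : dyckLE (X ++ A) R) (hRQ : dyckLE R (Y ++ B)) :
    ∃ M T, R = M ++ T ∧ M.Perm X ∧ dyckLE X M ∧ dyckLE M Y ∧ dyckLE A T ∧ dyckLE T B := by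
  obtain ⟨M, T, rfl, hM⟩ : ∃ M T, R = M ++ T ∧ M.length = X.length :=
    ⟨R.take X.length, R.drop X.length, (List.take_append_drop _ _).symm, by simpa using hlen⟩
  have hXM : dyckLE X M := by simpa [← hM] using hPR.take X.length
  have hMY : dyckLE M Y := by simpa [hM, hXY.length_eq] using hRQ.take M.length
  have hperm : M.Perm X := by
    refine perm_of_length_eq_of_prefHeight_eq hM (le_antisymm ?_ (hXM _))
    rw [prefHeight_eq_of_perm_of_length_le hXY hM.ge]
    exact hMY _
  exact ⟨M, T, rfl, hperm, hXM, hMY, hPR.of_append_of_perm hperm.symm,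
    hRQ.of_append_of_perm (hperm.trans hXY)⟩

theorem exists_perm_of_dyckLE_of_dyckLE (hXY : X.Perm Y)
    (hlen : (A ++ (X ++ B)).length = R.length)
    (hPR : dyckLE (A ++ (X ++ B)) R) (hRQ : dyckLE R (A ++ (Y ++ B))) :
    ∃ M, M.Perm X ∧ R = A ++ (M ++ B) := by
  simp only [List.length_append] at hlen
  obtain ⟨A', R', rfl, -, hA, hA', hPR', hRQ'⟩ :=
    exists_append_of_dyckLE_of_dyckLE (.refl A) (by lia) hPR hRQ
  obtain rfl : A = A' := antisymm hA hA'
  obtain ⟨M, B', rfl, hM, -, -, hB, hB'⟩ :=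
    exists_append_of_dyckLE_of_dyckLE hXY (by simp only [List.length_append] at hlen; lia) hPR' hRQ'
  obtain rfl : B = B' := antisymm hB hB'
  exact ⟨M, hM, rfl⟩

end DyckLE

section IsDyckWord

variable {n : ℕ} {P R : List Bool}

theorem IsDyckWord.length_eq (hP : IsDyckWord n P) : P.length = n + n := by
  rw [← List.count_true_add_count_false, hP.1, hP.2.1]

theorem IsDyckWord.of_perm_of_dyckLE (hP : IsDyckWord n P) (hperm : R.Perm P)
    (hPR : dyckLE P R) : IsDyckWord n R := by
  refine ⟨(hperm.count_eq _).trans hP.1, (hperm.count_eq _).trans hP.2.1, fun p hp => ?_⟩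
  have hnonneg := hP.2.2 _ (List.take_prefix p.length P)
  have hheight := hPR p.length
  rw [prefHeight, prefHeight, ← List.prefix_iff_eq_take.mp hp] at hheight
  lia

theorem linearInterval_and_intervalHeight_of_perm_iff {k : ℕ} {A B : List Bool}
    {W : ℕ → List Bool} (hP : IsDyckWord n (A ++ (W 0 ++ B)))
    (hperm : ∀ M, M.Perm (W 0) ↔ ∃ i ≤ k, M = W i)
    (hW : ∀ i < k, ltOf dyckLE (W i) (W (i + 1))) :
    LinearInterval (DyckSet n) dyckLE (A ++ (W 0 ++ B)) (A ++ (W k ++ B)) ∧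
      IntervalHeight (DyckSet n) dyckLE (A ++ (W 0 ++ B)) (A ++ (W k ++ B)) k := by
  have hpermW : ∀ i ≤ k, (W i).Perm (W 0) := fun i hi => (hperm _).mpr ⟨i, hi, rfl⟩
  refine linearInterval_and_intervalHeight_of_chain (W := fun i => A ++ (W i ++ B))
    (fun i hi => hP.of_perm_of_dyckLE (((hpermW i hi).append_right B).append_left A) ?_)
    (fun i hi => ltOf_append_append (hW i hi) ?_) (fun R hR hPR hRQ => ?_)
  · exact (dyckLE_append_append_iff (hpermW i hi).length_eq.symm).mpr
      (le_of_forall_ltOf_succ hW i.zero_le hi)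
  · exact ((hpermW i hi.le).trans (hpermW (i + 1) hi).symm).length_eq
  · obtain ⟨M, hM, rfl⟩ := exists_perm_of_dyckLE_of_dyckLE (hpermW k le_rfl).symm
      (hP.length_eq.trans (IsDyckWord.length_eq hR).symm) hPR hRQ
    obtain ⟨i, hi, rfl⟩ := (hperm M).mp hM
    exact ⟨i, hi, rfl⟩

end IsDyckWord

section OddLetterWord

/-- The word consisting of `i` letters `b`, the opposite letter, and `j` letters `b`. The factors in
which the words of a left interval (`b = false`) or right interval (`b = true`) differ are of this
form. -/
def oddLetterWord (b : Bool) (i j : ℕ) : List Bool :=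
  List.replicate i b ++ (!b) :: List.replicate j b

theorem perm_oddLetterWord_iff {b : Bool} {i j : ℕ} {M : List Bool} :
    M.Perm (oddLetterWord b i j) ↔ ∃ i' j', i' + j' = i + j ∧ M = oddLetterWord b i' j' := by
  have hperm : ∀ i j, (oddLetterWord b i j).Perm ((!b) :: List.replicate (i + j) b) := fun i j =>
    List.replicate_append_replicate ▸ List.perm_middle
  constructor
  · intro hM
    obtain ⟨s, t, rfl⟩ := List.append_of_mem (hM.mem_iff.mpr (by simp [oddLetterWord]) : (!b) ∈ M)
    have hst : s ++ t = List.replicate (i + j) b :=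
      List.perm_replicate.mp (List.perm_middle.symm.trans (hM.trans (hperm i j))).cons_inv
    obtain ⟨hlen, hs, ht⟩ := List.append_eq_replicate_iff.mp hst
    exact ⟨s.length, t.length, hlen, by rw [oddLetterWord, ← hs, ← ht]⟩
  · rintro ⟨i', j', hij, rfl⟩
    exact (hperm i' j').trans (hij ▸ (hperm i j).symm)

theorem ltOf_down_up : ltOf dyckLE [false, true] [true, false] := by
  refine ⟨?_, fun h => ?_⟩
  · rintro (_ | _ | j) <;> simp
  · have := h 1
    simp at this

theorem ltOf_oddLetterWord_false (i j : ℕ) :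
    ltOf dyckLE (oddLetterWord false (i + 1) j) (oddLetterWord false i (j + 1)) := by
  simpa [oddLetterWord, List.replicate_succ' (n := i), List.replicate_succ (n := j)] using
    ltOf_append_append (A := List.replicate i false) (B := List.replicate j false)
      ltOf_down_up rfl

theorem ltOf_oddLetterWord_true (i j : ℕ) :
    ltOf dyckLE (oddLetterWord true i (j + 1)) (oddLetterWord true (i + 1) j) := by
  simpa [oddLetterWord, List.replicate_succ' (n := i), List.replicate_succ (n := j)] using
    ltOf_append_append (A := List.replicate i true) (B := List.replicate j true)
      ltOf_down_up rfl

end OddLetterWord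

section Intervals

variable {n k : ℕ} {A B : List Bool}

theorem linearInterval_and_intervalHeight_left
    (hP : IsDyckWord n (A ++ (List.replicate k false ++ true :: B))) :
    LinearInterval (DyckSet n) dyckLE (A ++ (List.replicate k false ++ true :: B))
        (A ++ (true :: (List.replicate k false ++ B))) ∧
      IntervalHeight (DyckSet n) dyckLE (A ++ (List.replicate k false ++ true :: B))
        (A ++ (true :: (List.replicate k false ++ B))) k := by
  have hperm (M : List Bool) : M.Perm (oddLetterWord false k 0) ↔
      ∃ i ≤ k, M = oddLetterWord false (k - i) i := by
    rw [perm_oddLetterWord_iff]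
    constructor
    · rintro ⟨l, i, hli, rfl⟩
      exact ⟨i, by lia, by rw [show k - i = l by lia]⟩
    · rintro ⟨i, hi, rfl⟩
      exact ⟨k - i, i, by lia, rfl⟩
  have hW (i : ℕ) (hi : i < k) : ltOf dyckLE (oddLetterWord false (k - i) i)
      (oddLetterWord false (k - (i + 1)) (i + 1)) := by
    rw [show k - i = k - (i + 1) + 1 by lia]
    exact ltOf_oddLetterWord_false _ _
  simpa [oddLetterWord] using linearInterval_and_intervalHeight_of_perm_iff
    (A := A) (B := B) (by simpa [oddLetterWord] using hP) hperm hW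

theorem linearInterval_and_intervalHeight_right
    (hP : IsDyckWord n (A ++ (false :: (List.replicate k true ++ B)))) :
    LinearInterval (DyckSet n) dyckLE (A ++ (false :: (List.replicate k true ++ B)))
        (A ++ (List.replicate k true ++ false :: B)) ∧
      IntervalHeight (DyckSet n) dyckLE (A ++ (false :: (List.replicate k true ++ B)))
        (A ++ (List.replicate k true ++ false :: B)) k := by
  have hperm (M : List Bool) : M.Perm (oddLetterWord true 0 k) ↔
      ∃ i ≤ k, M = oddLetterWord true i (k - i) := by
    rw [perm_oddLetterWord_iff]
    constructor
    · rintro ⟨i, l, hil, rfl⟩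
      exact ⟨i, by lia, by rw [show k - i = l by lia]⟩
    · rintro ⟨i, hi, rfl⟩
      exact ⟨i, k - i, by lia, rfl⟩
  have hW (i : ℕ) (hi : i < k) : ltOf dyckLE (oddLetterWord true i (k - i))
      (oddLetterWord true (i + 1) (k - (i + 1))) := by
    rw [show k - i = k - (i + 1) + 1 by lia]
    exact ltOf_oddLetterWord_true _ _
  simpa [oddLetterWord] using linearInterval_and_intervalHeight_of_perm_iff
    (A := A) (B := B) (by simpa [oddLetterWord] using hP) hperm hW

end Intervals

/-- left/right intervals in the Dyck lattice are linear of height `k`. -/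
theorem stmt3 (n k : ℕ) (hk : 2 ≤ k) (P Q : List Bool)
    (hP : IsDyckWord n P) (hQ : IsDyckWord n Q)
    (h : (∃ A B : List Bool,
            P = A ++ (List.replicate k false ++ true :: B) ∧
            Q = A ++ (true :: (List.replicate k false ++ B))) ∨
         (∃ A B : List Bool,
            P = A ++ (false :: (List.replicate k true ++ B)) ∧
            Q = A ++ (List.replicate k true ++ false :: B))) :
    dyckLE P Q ∧ LinearInterval (DyckSet n) dyckLE P Q ∧
      IntervalHeight (DyckSet n) dyckLE P Q k := by
  obtain ⟨hlinear, hheight⟩ : LinearInterval (DyckSet n) dyckLE P Q ∧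
      IntervalHeight (DyckSet n) dyckLE P Q k := by
    rcases h with ⟨A, B, rfl, rfl⟩ | ⟨A, B, rfl, rfl⟩
    · exact linearInterval_and_intervalHeight_left hP
    · exact linearInterval_and_intervalHeight_right hP
  exact ⟨hlinear.2.2.1, hlinear, hheight⟩
end

section
/- For every increment function δ of size n, every Dyck word P of size n and every up step u_i of P, the δ-excursion of u_i is well defined (i.e., some factor of P starting at u_i has δ-elevation 0), and it is a prefix of the excursion of u_i (the smallest factor of P starting at u_i that is itself a Dyck word). -/
/-!
Up steps weigh at most `1`, so the δ-elevation measured from an up step grows no faster than the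
height of the path, and is nonpositive as soon as the path returns to its starting height.  It is
nonnegative after the up step itself and descends by at most `1` at a time, so it vanishes by then.
The end of the word and the end of the excursion both lie no higher than the start: the former
gives existence of the δ-excursion, the latter the prefix property.
-/

theorem exists_mem_Icc_eq_of_le_add_one {f : ℕ → ℤ} (hf : ∀ k, f k ≤ f (k + 1) + 1) {a b : ℕ}
    (hab : a ≤ b) {v : ℤ} (ha : v ≤ f a) (hb : f b ≤ v) : ∃ c ∈ Set.Icc a b, f c = v := by
  induction b, hab using Nat.le_induction with
  | base => exact ⟨a, Set.left_mem_Icc.2 le_rfl, le_antisymm hb ha⟩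
  | succ b hab ih =>
    rcases le_or_gt (f b) v with hbv | hvb
    · obtain ⟨c, hc, hcv⟩ := ih hbv
      exact ⟨c, Set.Icc_subset_Icc_right b.le_succ hc, hcv⟩
    · have := hf b
      exact ⟨b + 1, Set.right_mem_Icc.2 (by omega), by omega⟩

theorem lt_length_of_getD_false_eq_true {w : List Bool} {q : ℕ} (h : w.getD q false = true) :
    q < w.length := by
  by_contra hq
  rw [List.getD_eq_default _ _ (not_lt.1 hq)] at h
  exact Bool.false_ne_true h

section UpStepPositions

variable {w : List Bool} {i : ℕ}

theorem length_filter_range_getD_false (w : List Bool) :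
    ((List.range w.length).filter fun q => w.getD q false = true).length = w.count true := by
  have hw : (List.range w.length).map (w.getD · false) = w :=
    List.ext_getElem (by simp) fun q _ hq => by simp [List.getElem?_eq_getElem hq]
  conv_rhs => rw [← hw]
  rw [List.count_eq_countP, List.countP_map, ← List.countP_eq_length_filter]
  congr 1

theorem getD_upPos (hi : 1 ≤ i) (hiw : i ≤ w.count true) : w.getD (upPos w i) false = true := by
  have hlt : i - 1 < ((List.range w.length).filter fun q => w.getD q false = true).length := by
    rw [length_filter_range_getD_false]
    omega
  have hmem : upPos w i ∈ (List.range w.length).filter fun q => w.getD q false = true := by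
    rw [upPos, List.getD_eq_getElem _ _ hlt]
    exact List.getElem_mem hlt
  simpa using (List.mem_filter.1 hmem).2

end UpStepPositions

section Heights

variable {w : List Bool} {p m n : ℕ}

theorem prefHeight_add (w : List Bool) (p m : ℕ) :
    prefHeight w (p + m) = prefHeight w p +
      (((w.drop p).take m).count true - ((w.drop p).take m).count false) := by
  simp only [prefHeight, List.take_add, List.count_append]
  push_cast
  ring

theorem IsDyckPath.prefHeight_add_eq (h : IsDyckPath ((w.drop p).take m)) :
    prefHeight w (p + m) = prefHeight w p := by
  simp [prefHeight_add, h.1]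

theorem IsDyckWord.prefHeight_nonneg (hw : IsDyckWord n w) (j : ℕ) : 0 ≤ prefHeight w j :=
  sub_nonneg.2 (Int.ofNat_le.2 (hw.2.2 _ (List.take_prefix j w)))

theorem IsDyckWord.prefHeight_length (hw : IsDyckWord n w) : prefHeight w w.length = 0 := by
  simp [prefHeight, hw.1, hw.2.1]

theorem IsDyckWord.prefHeight_length_le (hw : IsDyckWord n w) (j : ℕ) :
    prefHeight w w.length ≤ prefHeight w j :=
  hw.prefHeight_length.trans_le (hw.prefHeight_nonneg j)

end Heights

section Elevation

variable {δ : ℕ → ℤ} {w : List Bool} {p m : ℕ}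

theorem IsIncFun.nonneg (hδ : IsIncFun δ) (j : ℕ) : 0 ≤ δ j := by
  rcases hδ j with h | h <;> simp [h]

theorem IsIncFun.le_one (hδ : IsIncFun δ) (j : ℕ) : δ j ≤ 1 := by
  rcases hδ j with h | h <;> simp [h]

theorem neg_one_le_stepVal (hδ : ∀ j, -1 ≤ δ j) (w : List Bool) (q : ℕ) :
    -1 ≤ stepVal δ w q := by
  unfold stepVal
  split_ifs
  exacts [hδ _, le_rfl]

theorem IsIncFun.stepVal_nonneg (hδ : IsIncFun δ) (hp : w.getD p false = true) :
    0 ≤ stepVal δ w p := by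
  rw [stepVal, if_pos hp]
  exact hδ.nonneg _

theorem getD_eq_true_of_stepVal_nonneg (h : 0 ≤ stepVal δ w p) : w.getD p false = true := by
  by_contra hp
  rw [stepVal, if_neg hp] at h
  omega

theorem stepVal_le_prefHeight_sub (hδ : ∀ j, δ j ≤ 1) (w : List Bool) (q : ℕ) :
    stepVal δ w q ≤ prefHeight w (q + 1) - prefHeight w q := by
  rcases lt_or_ge q w.length with hq | hq
  · rw [prefHeight_add, List.drop_eq_getElem_cons hq, stepVal, List.getD_eq_getElem _ _ hq]
    cases w[q] <;> simp [hδ]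
  · -- Past the end of `w` the default letter makes `stepVal` equal to `-1`; the height is constant.
    simp [stepVal, prefHeight, List.take_of_length_le, hq, hq.trans q.le_succ]

theorem elev_le_prefHeight_sub (hδ : ∀ j, δ j ≤ 1) (w : List Bool) {a b : ℕ} (hab : a ≤ b) :
    elev δ w a b ≤ prefHeight w b - prefHeight w a :=
  calc elev δ w a b
      ≤ ∑ q ∈ Finset.Ico a b, (prefHeight w (q + 1) - prefHeight w q) :=
        Finset.sum_le_sum fun q _ => stepVal_le_prefHeight_sub hδ w q
    _ = prefHeight w b - prefHeight w a := Finset.sum_Ico_sub _ hab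

theorem elev_succ {a b : ℕ} (hab : a ≤ b) :
    elev δ w a (b + 1) = elev δ w a b + stepVal δ w b :=
  Finset.sum_Ico_succ_top hab _

theorem exists_elev_eq_zero_of_prefHeight_le (hδ₀ : ∀ j, -1 ≤ δ j) (hδ₁ : ∀ j, δ j ≤ 1)
    (hp : 0 ≤ stepVal δ w p) (hm : 0 < m) (hpm : prefHeight w (p + m) ≤ prefHeight w p) :
    ∃ k ∈ Set.Icc 1 m, elev δ w p (p + k) = 0 := by
  have descent (k : ℕ) : elev δ w p (p + k) ≤ elev δ w p (p + (k + 1)) + 1 := by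
    have := neg_one_le_stepVal hδ₀ w (p + k)
    rw [← add_assoc, elev_succ (p.le_add_right k)]
    omega
  have start : 0 ≤ elev δ w p (p + 1) := by simpa [elev] using hp
  have finish : elev δ w p (p + m) ≤ 0 :=
    (elev_le_prefHeight_sub hδ₁ w (p.le_add_right m)).trans (sub_nonpos.2 hpm)
  exact exists_mem_Icc_eq_of_le_add_one descent hm start finish

end Elevation

section Excursions

variable {δ : ℕ → ℤ} {w C E : List Bool} {p m : ℕ}

theorem exists_isDeltaExcAt (hp : w.getD p false = true) (hm : 0 < m) (hpm : p + m ≤ w.length)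
    (hzero : elev δ w p (p + m) = 0) : ∃ C, IsDeltaExcAt δ w p C := by
  classical
  have hex : ∃ k, 0 < k ∧ elev δ w p (p + k) = 0 := ⟨m, hm, hzero⟩
  obtain ⟨hpos, hfind⟩ := Nat.find_spec hex
  have hle : Nat.find hex ≤ m := Nat.find_min' hex ⟨hm, hzero⟩
  exact ⟨_, hp, Nat.find hex, hpos, by omega, rfl, hfind,
    fun k hk hlt h => Nat.find_min hex hlt ⟨hk, h⟩⟩

theorem IsDeltaExcAt.prefix_take (hC : IsDeltaExcAt δ w p C) (hm : 0 < m)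
    (hzero : elev δ w p (p + m) = 0) : C <+: (w.drop p).take m := by
  obtain ⟨-, k, -, -, rfl, -, hmin⟩ := hC
  exact List.take_prefix_take_left (not_lt.1 fun hmk => hmin m hm hmk hzero)

theorem IsDeltaExcAt.prefix_of_isExcursionAt (hδ₀ : ∀ j, -1 ≤ δ j) (hδ₁ : ∀ j, δ j ≤ 1)
    (hp : 0 ≤ stepVal δ w p) (hC : IsDeltaExcAt δ w p C) (hE : IsExcursionAt w p E) :
    C <+: E := by
  obtain ⟨-, m, hm, -, rfl, hDyck, -⟩ := hE
  obtain ⟨k, ⟨hk, hkm⟩, hzero⟩ :=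
    exists_elev_eq_zero_of_prefHeight_le hδ₀ hδ₁ hp hm hDyck.prefHeight_add_eq.le
  exact (hC.prefix_take hk hzero).trans (List.take_prefix_take_left hkm)

theorem stmt5_general {b : ℕ} (hδ₀ : ∀ j, -1 ≤ δ j) (hδ₁ : ∀ j, δ j ≤ 1)
    (hp : 0 ≤ stepVal δ w p) (hpb : p < b) (hb : b ≤ w.length)
    (hheight : prefHeight w b ≤ prefHeight w p) :
    ∃ C, IsDeltaExcAt δ w p C ∧ ∀ E, IsExcursionAt w p E → C <+: E := by
  obtain ⟨m, rfl⟩ := Nat.exists_eq_add_of_le hpb.le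
  obtain ⟨k, ⟨hk, hkm⟩, hzero⟩ :=
    exists_elev_eq_zero_of_prefHeight_le hδ₀ hδ₁ hp (by omega) hheight
  obtain ⟨C, hC⟩ :=
    exists_isDeltaExcAt (getD_eq_true_of_stepVal_nonneg hp) hk (by omega) hzero
  exact ⟨C, hC, fun E hE => hC.prefix_of_isExcursionAt hδ₀ hδ₁ hp hE⟩

end Excursions

/-- the δ-excursion of any up step `u_i` of a Dyck word is well defined,
and is a prefix of the excursion of `u_i`. -/
theorem stmt5 (n : ℕ) (δ : ℕ → ℤ) (hδ : IsIncFun δ) (P : List Bool)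
    (hP : IsDyckWord n P) (i : ℕ) (hi1 : 1 ≤ i) (hin : i ≤ n) :
    ∃ C : List Bool, IsDeltaExcAt δ P (upPos P i) C ∧
      ∀ E : List Bool, IsExcursionAt P (upPos P i) E → C <+: E := by
  have hup : P.getD (upPos P i) false = true := getD_upPos hi1 (hP.1.symm ▸ hin)
  exact stmt5_general (fun j => neg_one_lt_zero.le.trans (hδ.nonneg j)) hδ.le_one
    (hδ.stepVal_nonneg hup) (lt_length_of_getD_false_eq_true hup) le_rfl
    (hP.prefHeight_length_le _)
end
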